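/- Let g be a compactly driven system with the USP and let h : ←U → X be given by E(←u) = {h(←u)}. Define the solution map Ψ : U^ℤ → X^ℤ by (Ψ(ū))_n = h(←u^n) for n ∈ ℤ. Then for every input ū, Ψ(ū) is the unique solution for ū, and Ψ is continuous when U^ℤ and X^ℤ carry the product topologies. -/

import Mathlib

open Metric Set Filter Topology Function

universe u' v'

variable {U : Type u'} {X : Type v'}

/-- `proc g u j m x = φ_ū(m+j, m, x)`: apply `g_{u m}, g_{u (m+1)}, …, g_{u (m+j-1)}`
to `x`, in that order. -/
def proc (g : U → X → X) (u : ℤ → U) : ℕ → ℤ → X → X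
  | 0, _, x => x
  | j + 1, m, x => g (u (m + j)) (proc g u j m x)

/-- A solution of the driven system `g` for the input `u`. -/
def IsSolution (g : U → X → X) (u : ℤ → U) (x : ℤ → X) : Prop :=
  ∀ n : ℤ, x (n + 1) = g (u n) (x n)

/-- The unique solution property: every input has exactly one solution. -/
def USP (g : U → X → X) : Prop :=
  ∀ u : ℤ → U, ∃! x : ℤ → X, IsSolution g u x

/-- The set of reachable states at time `n`: `X_n(ū) = ⋂_{j ≥ 1} φ_ū(n, n - j, X)`. -/
def reach (g : U → X → X) (u : ℤ → U) (n : ℤ) : Set X :=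
  ⋂ j : ℕ, Set.range (proc g u (j + 1) (n - (j + 1)))

/-- The reachable set `X_U = ⋃ {X_n(ū) : n ∈ ℤ, ū ∈ U^ℤ}`. -/
def reachSet (g : U → X → X) : Set X :=
  ⋃ u : ℤ → U, ⋃ n : ℤ, reach g u n

/-- The left-infinite part `←u^n = (…, u_{n-2}, u_{n-1})` of an input `u`;
coordinate `k : ℕ` corresponds to time `n - 1 - k` (so `0` is the most recent one). -/
def leftOf (u : ℤ → U) (n : ℤ) : ℕ → U := fun k => u (n - 1 - (k : ℤ))

/-- The right-shift map `r : (…, u_{-2}, u_{-1}) ↦ (…, u_{-3}, u_{-2})`. -/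
def shift (w : ℕ → U) : ℕ → U := fun k => w (k + 1)

/-- The concatenation map `σ_v : (…, u_{-2}, u_{-1}) ↦ (…, u_{-2}, u_{-1}, v)`. -/
def append (v : U) (w : ℕ → U) : ℕ → U := fun k => Nat.casesOn k v w

/-- `encProc g w j = φ_ū(0, -j, ·)` for any input `ū` whose left-infinite part is `w`. -/
def encProc (g : U → X → X) : (ℕ → U) → ℕ → X → X
  | _, 0, x => x
  | w, j + 1, x => g (w 0) (encProc g (shift w) j x)

/-- The encoding map `E(←u) = X_0(ū) = ⋂_{j ≥ 1} φ_ū(0, -j, X)`. -/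
def enc (g : U → X → X) (w : ℕ → U) : Set X :=
  ⋂ j : ℕ, Set.range (encProc g w (j + 1))

/-- The map `g̃_v : (…, x_{-2}, x_{-1}) ↦ (…, x_{-2}, x_{-1}, g(v, x_{-1}))`. -/
def tildeg (g : U → X → X) (v : U) (x : ℕ → X) : ℕ → X :=
  fun k => Nat.casesOn k (g v (x 0)) x

/-- The Hausdorff semi-distance `dist(A, B) = sup_{a ∈ A} inf_{b ∈ B} d(a, b)`. -/
noncomputable def semiDist [MetricSpace X] (A B : Set X) : ℝ :=
  sSup ((fun a => Metric.infDist a B) '' A)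

/-!
Two facts about the encoding map `enc` carry the proof. Appending an input value `v` on the right
moves the reachable states by `g v`, so when every `enc g w` is a singleton `{h w}` the sequence
`h (leftOf u n)` is itself a solution; every solution stays in the reachable sets, so it is the
only one. On the topological side, the graph of `enc g` is an intersection of projections of
closed sets along the compact space `X`, hence closed; compactness of `X` turns this into upper
hemicontinuity, which for a singleton-valued map is continuity.
-/

section Reachability

lemma leftOf_add_one_zero (u : ℤ → U) (n : ℤ) : leftOf u (n + 1) 0 = u n := by
  simp [leftOf]

lemma shift_leftOf_add_one (u : ℤ → U) (n : ℤ) : shift (leftOf u (n + 1)) = leftOf u n := by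
  funext k
  simp only [shift, leftOf]
  congr 1
  push_cast
  ring

lemma mapsTo_enc_shift (g : U → X → X) (w : ℕ → U) :
    MapsTo (g (w 0)) (enc g (shift w)) (enc g w) := by
  refine fun x hx => mem_iInter.2 fun j => ?_
  cases j with
  | zero => exact ⟨x, rfl⟩
  | succ j =>
    obtain ⟨y, rfl⟩ := mem_iInter.1 hx j
    exact ⟨y, rfl⟩

variable {g : U → X → X} {u : ℤ → U}

lemma IsSolution.encProc_leftOf {x : ℤ → X} (hx : IsSolution g u x) (j : ℕ) (m : ℤ) :
    encProc g (leftOf u (m + j)) j (x m) = x (m + j) := by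
  induction j with
  | zero => simp [encProc]
  | succ j ih =>
    have h_time : m + ((j + 1 : ℕ) : ℤ) = m + j + 1 := by push_cast; ring
    rw [h_time, encProc, leftOf_add_one_zero, shift_leftOf_add_one, ih, hx]

lemma IsSolution.apply_mem_enc {x : ℤ → X} (hx : IsSolution g u x) (n : ℤ) :
    x n ∈ enc g (leftOf u n) := by
  refine mem_iInter.2 fun j => ⟨x (n - (j + 1 : ℕ)), ?_⟩
  simpa only [sub_add_cancel] using hx.encProc_leftOf (j + 1) (n - (j + 1 : ℕ))

lemma isSolution_iff_of_enc_eq_singleton {h : (ℕ → U) → X} (hh : ∀ w, enc g w = {h w})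
    {x : ℤ → X} : IsSolution g u x ↔ x = fun n => h (leftOf u n) := by
  refine ⟨fun hx => funext fun n => ?_, ?_⟩
  · simpa only [hh, mem_singleton_iff] using hx.apply_mem_enc n
  · rintro rfl n
    have h_step := mapsTo_enc_shift g (leftOf u (n + 1))
    simp only [leftOf_add_one_zero, shift_leftOf_add_one, hh, mapsTo_singleton,
      mem_singleton_iff] at h_step
    exact h_step.symm

end Reachability

lemma upperHemicontinuous_of_isClosed_cgraph {α β : Type*} [TopologicalSpace α]
    [TopologicalSpace β] [CompactSpace β] {F : α → Set β}
    (hF : IsClosed {p : α × β | p.2 ∈ F p.1}) : UpperHemicontinuous F := by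
  refine upperHemicontinuous_iff_isClosed_compl_preimage_Iic_compl.2 fun C hC => ?_
  have h_meets : (F ⁻¹' Iic Cᶜ)ᶜ =
      Prod.fst '' ({p : α × β | p.2 ∈ F p.1} ∩ Prod.snd ⁻¹' C) := by
    ext a
    simp [Set.subset_def]
  rw [h_meets]
  exact isClosedMap_fst_of_compactSpace _ (hF.inter (hC.preimage continuous_snd))

section Continuity

variable [TopologicalSpace U] {g : U → X → X}

lemma continuous_leftOf (n : ℤ) : Continuous fun u : ℤ → U => leftOf u n :=
  continuous_pi fun _ => continuous_apply _

lemma continuous_shift : Continuous (shift : (ℕ → U) → ℕ → U) :=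
  continuous_pi fun _ => continuous_apply _

variable [TopologicalSpace X]

lemma continuous_encProc (hg : Continuous fun p : U × X => g p.1 p.2) (j : ℕ) :
    Continuous fun p : (ℕ → U) × X => encProc g p.1 j p.2 := by
  induction j with
  | zero => exact continuous_snd
  | succ j ih =>
    have h_last : Continuous fun p : (ℕ → U) × X => p.1 0 :=
      (continuous_apply 0).comp continuous_fst
    have h_past : Continuous fun p : (ℕ → U) × X => encProc g (shift p.1) j p.2 :=
      ih.comp (continuous_shift.prodMap continuous_id)
    exact hg.comp (h_last.prodMk h_past)

variable [CompactSpace X] [T2Space X]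

lemma isClosed_cgraph_enc (hg : Continuous fun p : U × X => g p.1 p.2) :
    IsClosed {p : (ℕ → U) × X | p.2 ∈ enc g p.1} := by
  have h_proj : {p : (ℕ → U) × X | p.2 ∈ enc g p.1} = ⋂ j : ℕ,
      Prod.fst '' {q : ((ℕ → U) × X) × X | encProc g q.1.1 (j + 1) q.2 = q.1.2} := by
    ext p
    simp [enc]
  rw [h_proj]
  refine isClosed_iInter fun j => isClosedMap_fst_of_compactSpace _ (isClosed_eq ?_ ?_)
  · exact (continuous_encProc hg (j + 1)).comp (continuous_fst.prodMap continuous_id)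
  · exact continuous_snd.comp continuous_fst

lemma upperHemicontinuous_enc (hg : Continuous fun p : U × X => g p.1 p.2) :
    UpperHemicontinuous (enc g) :=
  upperHemicontinuous_of_isClosed_cgraph (isClosed_cgraph_enc hg)

lemma continuous_of_enc_eq_singleton (hg : Continuous fun p : U × X => g p.1 p.2)
    {h : (ℕ → U) → X} (hh : ∀ w, enc g w = {h w}) : Continuous h := by
  rw [← upperHemicontinuous_singleton_iff, ← funext hh]
  exact upperHemicontinuous_enc hg

end Continuity

theorem stmt_15_general [TopologicalSpace X] [CompactSpace X] [T2Space X] [TopologicalSpace U]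
    (g : U → X → X) (hg : Continuous fun p : U × X => g p.1 p.2)
    (h : (ℕ → U) → X) (hh : ∀ w : ℕ → U, enc g w = {h w}) :
    (∀ u : ℤ → U, IsSolution g u (fun n => h (leftOf u n)) ∧
        ∀ x : ℤ → X, IsSolution g u x → x = fun n => h (leftOf u n)) ∧
      Continuous (fun (u : ℤ → U) (n : ℤ) => h (leftOf u n)) := by
  refine ⟨fun u => ⟨(isSolution_iff_of_enc_eq_singleton hh).2 rfl,
    fun x => (isSolution_iff_of_enc_eq_singleton hh).1⟩, continuous_pi fun n => ?_⟩
  exact (continuous_of_enc_eq_singleton hg hh).comp (continuous_leftOf n)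

/-- under the USP, the solution map `Ψ(ū) = (h(←u^n))_{n ∈ ℤ}` produces,
for every input, the unique solution, and `Ψ` is continuous in the product topologies. -/
theorem stmt_15 [MetricSpace X] [CompactSpace X] [MetricSpace U] [CompactSpace U]
    (g : U → X → X) (hg : Continuous fun p : U × X => g p.1 p.2)
    (husp : USP g) (h : (ℕ → U) → X) (hh : ∀ w : ℕ → U, enc g w = {h w}) :
    (∀ u : ℤ → U, IsSolution g u (fun n => h (leftOf u n)) ∧
        ∀ x : ℤ → X, IsSolution g u x → x = fun n => h (leftOf u n)) ∧
      Continuous (fun (u : ℤ → U) (n : ℤ) => h (leftOf u n)) :=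
  stmt_15_general g hg h hh
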